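/- arXiv:0710.1461 — 2 statements merged into one kernel-verified Lean document; each statement's English description precedes it below -/
import Mathlib

section
/- Let (Y, ‖·‖) be a normed space and X its topological dual with weak-* topology σ(X,Y). Let (g_n) be real-valued convex functions on Y converging pointwise to g, with |g_n(y)| ≤ c(1 + ‖y‖) for all n and y and some c > 0. Then the convex conjugates f_n = g_n* Γ-converge to f = g* on X with respect to σ(X,Y). -/
open Filter Topology

/-!
For the lower bound, each single `y` gives `(g n)* x' ≥ x' y - g n y → x y - g y` as `n → ∞` and
`x' → x` jointly. For the upper bound, fix finitely many `y₁, …, yₘ` that define a weak-*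
neighbourhood of `x`, and let `M > g* x`, so that `g - x + M > 0`. Pointwise convergence of convex
functions is locally uniform in finite dimension, so on the span of the `yⱼ` the convex functions
`g n - x + M` are eventually nonnegative on any given ball; starting from a bounded value at `0`,
they can then decrease only with small slope outside that ball. Thus `x - δ‖·‖ ≤ g n + M` on the
span, and a Hahn-Banach sandwich between this concave and this convex function yields `x'` on the
whole space, close to `x` at every `yⱼ`, with `(g n)* x' ≤ M`.
-/

section GammaConvergence

variable {ι X : Type*} [TopologicalSpace X] {l : Filter ι} {F : ι → X → EReal} {x : X}

/-- The lower Γ-limit of a family of functions along a filter. -/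
noncomputable def gammaLiminf (F : ι → X → EReal) (l : Filter ι) (x : X) : EReal :=
  ⨆ U ∈ 𝓝 x, l.liminf fun i => ⨅ x' ∈ U, F i x'

/-- The upper Γ-limit of a family of functions along a filter. -/
noncomputable def gammaLimsup (F : ι → X → EReal) (l : Filter ι) (x : X) : EReal :=
  ⨆ U ∈ 𝓝 x, l.limsup fun i => ⨅ x' ∈ U, F i x'

/-- Γ-convergence of a family of functions to `F₀` along a filter: both Γ-limits equal `F₀`. -/
def GammaTendsto (F : ι → X → EReal) (l : Filter ι) (F₀ : X → EReal) : Prop :=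
  ∀ x, gammaLiminf F l x = F₀ x ∧ gammaLimsup F l x = F₀ x

lemma gammaLiminf_le_gammaLimsup [l.NeBot] : gammaLiminf F l x ≤ gammaLimsup F l x :=
  iSup₂_mono fun _ _ => liminf_le_limsup

lemma le_gammaLiminf {a : EReal} (h : ∀ᶠ p : ι × X in l ×ˢ 𝓝 x, a ≤ F p.1 p.2) :
    a ≤ gammaLiminf F l x := by
  obtain ⟨P, hP, Q, hQ, hPQ⟩ := eventually_prod_iff.1 h
  refine le_iSup₂_of_le {x' | Q x'} hQ (le_liminf_of_le (by isBoundedDefault) ?_)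
  filter_upwards [hP] with i hi
  exact le_iInf₂ fun x' hx' => hPQ hi hx'

lemma gammaLimsup_le {a : EReal} (h : ∀ U ∈ 𝓝 x, ∀ᶠ i in l, ∃ x' ∈ U, F i x' ≤ a) :
    gammaLimsup F l x ≤ a := by
  refine iSup₂_le fun U hU => limsup_le_of_le (by isBoundedDefault) ?_
  filter_upwards [h U hU] with i ⟨x', hx'U, hx'⟩
  exact iInf₂_le_of_le x' hx'U hx'

lemma GammaTendsto.of_le [l.NeBot] {F₀ : X → EReal} (hlow : ∀ x, F₀ x ≤ gammaLiminf F l x)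
    (hup : ∀ x, gammaLimsup F l x ≤ F₀ x) : GammaTendsto F l F₀ := fun x =>
  ⟨(gammaLiminf_le_gammaLimsup.trans (hup x)).antisymm (hlow x),
    (hup x).antisymm ((hlow x).trans gammaLiminf_le_gammaLimsup)⟩

end GammaConvergence

section ConvexOn

variable {ι E : Type*} [NormedAddCommGroup E] [NormedSpace ℝ E] {l : Filter ι}

lemma continuous_of_convexOn_of_le {f h : E → ℝ} (hf : ConvexOn ℝ Set.univ f) (hh : Continuous h)
    (hfh : ∀ y, f y ≤ h y) : Continuous f := by
  have hbdd : (𝓝 (0 : E)).IsBoundedUnder (· ≤ ·) f :=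
    (hh.tendsto 0).isBoundedUnder_le.mono_le (.of_forall hfh)
  refine continuousOn_univ.1 (((hf.continuousOn_tfae isOpen_univ Set.univ_nonempty).out 3 1).1 ?_)
  exact ⟨0, Set.mem_univ 0, hbdd⟩

lemma neg_mul_norm_le_of_convexOn {f : E → ℝ} (hf : ConvexOn ℝ Set.univ f) {R δ : ℝ} (hR : 0 < R)
    (hnonneg : ∀ v ∈ Metric.closedBall 0 R, 0 ≤ f v) (hzero : f 0 ≤ δ * R) (v : E) :
    -(δ * ‖v‖) ≤ f v := by
  have hδ : 0 ≤ δ :=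
    nonneg_of_mul_nonneg_left ((hnonneg 0 (Metric.mem_closedBall_self hR.le)).trans hzero) hR
  rcases le_or_gt ‖v‖ R with hv | hv
  · exact (neg_nonpos.2 (by positivity)).trans (hnonneg v (by simpa using hv))
  · have hv0 : 0 < ‖v‖ := hR.trans hv
    have hsphere : 0 ≤ f ((R / ‖v‖) • v) := hnonneg _ (by
      rw [mem_closedBall_zero_iff, norm_smul, Real.norm_of_nonneg (by positivity),
        div_mul_cancel₀ _ hv0.ne'])
    have hseg : f ((R / ‖v‖) • v) ≤ (1 - R / ‖v‖) * f 0 + R / ‖v‖ * f v := by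
      simpa using hf.2 (Set.mem_univ 0) (Set.mem_univ v)
        (sub_nonneg.2 ((div_le_one hv0).2 hv.le)) (by positivity) (sub_add_cancel 1 (R / ‖v‖))
    have hscaled : 0 ≤ (‖v‖ - R) * f 0 + R * f v := by
      calc 0 ≤ ‖v‖ * ((1 - R / ‖v‖) * f 0 + R / ‖v‖ * f v) :=
            mul_nonneg hv0.le (hsphere.trans hseg)
        _ = (‖v‖ - R) * f 0 + R * f v := by field_simp
    have hdecrease : (‖v‖ - R) * f 0 ≤ ‖v‖ * (δ * R) :=
      calc (‖v‖ - R) * f 0 ≤ (‖v‖ - R) * (δ * R) :=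
            mul_le_mul_of_nonneg_left hzero (sub_nonneg.2 hv.le)
        _ ≤ ‖v‖ * (δ * R) := mul_le_mul_of_nonneg_right (by linarith) (by positivity)
    refine le_of_mul_le_mul_left ?_ hR
    linarith

variable [FiniteDimensional ℝ E] {f : ι → E → ℝ} {f₀ : E → ℝ}

lemma exists_ball_eventually_abs_le_of_convexOn (hf : ∀ i, ConvexOn ℝ Set.univ (f i))
    (hlim : ∀ v, Tendsto (fun i => f i v) l (𝓝 (f₀ v))) (x : E) :
    ∃ r > 0, ∃ B, ∀ᶠ i in l, ∀ v ∈ Metric.ball x r, |f i v| ≤ B := by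
  obtain ⟨b, hxb, -⟩ := exists_mem_interior_convexHull_affineBasis (univ_mem : Set.univ ∈ 𝓝 x)
  obtain ⟨r, hr, hball⟩ := Metric.mem_nhds_iff.1 (mem_interior_iff_mem_nhds.1 hxb)
  obtain ⟨C, hC⟩ := (Set.finite_range fun j => f₀ (b j)).bddAbove
  have hvertices : ∀ᶠ i in l, ∀ j, f i (b j) ≤ C + 1 := eventually_all.2 fun j =>
    (hlim (b j)).eventually_le_const ((hC ⟨j, rfl⟩).trans_lt (lt_add_one C))
  have hcenter : ∀ᶠ i in l, f₀ x - 1 ≤ f i x := (hlim x).eventually_const_le (by linarith)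
  refine ⟨r, hr, max (C + 1) (C + 1 - 2 * (f₀ x - 1)), ?_⟩
  filter_upwards [hvertices, hcenter] with i hi hix
  have hupper : ∀ v ∈ Metric.ball x r, f i v ≤ C + 1 := fun v hv => by
    obtain ⟨_, ⟨j, rfl⟩, hj⟩ := (hf i).exists_ge_of_mem_convexHull (Set.subset_univ _) (hball hv)
    exact hj.trans (hi j)
  intro v hv
  have hreflect : f i ((2 : ℝ) • x - v) ≤ C + 1 := hupper _ (by
    have : (2 : ℝ) • x - v - x = x - v := by module
    rwa [mem_ball_iff_norm, this, ← mem_ball_iff_norm'])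
  have hmid : f i x ≤ 1 / 2 * f i v + 1 / 2 * f i ((2 : ℝ) • x - v) := by
    have := (hf i).2 (Set.mem_univ v) (Set.mem_univ ((2 : ℝ) • x - v))
      one_half_pos.le one_half_pos.le (add_halves 1)
    rwa [show (1 / 2 : ℝ) • v + (1 / 2 : ℝ) • ((2 : ℝ) • x - v) = x by module] at this
  refine abs_le'.2 ⟨(hupper v hv).trans (le_max_left _ _), le_trans ?_ (le_max_right _ _)⟩
  linarith

lemma tendsto_prod_nhds_of_convexOn (hf : ∀ i, ConvexOn ℝ Set.univ (f i))
    (hlim : ∀ v, Tendsto (fun i => f i v) l (𝓝 (f₀ v))) (x : E) :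
    Tendsto (fun p : ι × E => f p.1 p.2) (l ×ˢ 𝓝 x) (𝓝 (f₀ x)) := by
  obtain ⟨r, hr, B, hB⟩ := exists_ball_eventually_abs_le_of_convexOn hf hlim x
  set K := (2 * B / (r / 2)).toNNReal
  have hlip : ∀ᶠ i in l, LipschitzOnWith K (f i) (Metric.ball x (r - r / 2)) := by
    filter_upwards [hB] with i hi
    exact ((hf i).subset (Set.subset_univ _) (convex_ball x r)).lipschitzOnWith_of_abs_le
      (half_pos hr) hi
  have hx : x ∈ Metric.ball x (r - r / 2) := Metric.mem_ball_self (by linarith)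
  have hdist : Tendsto (fun p : ι × E => K * dist p.2 x + dist (f p.1 x) (f₀ x)) (l ×ˢ 𝓝 x)
      (𝓝 (K * dist x x + dist (f₀ x) (f₀ x))) :=
    ((tendsto_snd.dist tendsto_const_nhds).const_mul _).add
      (((hlim x).comp tendsto_fst).dist tendsto_const_nhds)
  simp only [dist_self, mul_zero, add_zero] at hdist
  refine tendsto_iff_dist_tendsto_zero.2 (squeeze_zero' (.of_forall fun _ => dist_nonneg) ?_ hdist)
  filter_upwards [hlip.prod_mk (Metric.isOpen_ball.mem_nhds hx)] with ⟨i, v⟩ ⟨hi, hv⟩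
  exact (dist_triangle _ (f i x) _).trans (add_le_add_left (hi.dist_le_mul v hv x hx) _)

lemma eventually_forall_pos_of_convexOn (hf : ∀ i, ConvexOn ℝ Set.univ (f i))
    (hlim : ∀ v, Tendsto (fun i => f i v) l (𝓝 (f₀ v))) {K : Set E} (hK : IsCompact K)
    (hpos : ∀ v ∈ K, 0 < f₀ v) : ∀ᶠ i in l, ∀ v ∈ K, 0 < f i v := by
  have hnhds : ∀ᶠ p : ι × E in l ×ˢ 𝓝ˢ K, 0 < f p.1 p.2 :=
    hK.mem_prod_nhdsSet_of_forall fun v hv =>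
      (tendsto_prod_nhds_of_convexOn hf hlim v).eventually_const_lt (hpos v hv)
  exact hnhds.curry.mono fun _ h => h.self_of_nhdsSet

lemma eventually_forall_neg_mul_norm_le_of_convexOn (hf : ∀ i, ConvexOn ℝ Set.univ (f i))
    (hlim : ∀ v, Tendsto (fun i => f i v) l (𝓝 (f₀ v))) (hpos : ∀ v, 0 < f₀ v)
    {δ : ℝ} (hδ : 0 < δ) : ∀ᶠ i in l, ∀ v, -(δ * ‖v‖) ≤ f i v := by
  have hR : 0 < (f₀ 0 + 1) / δ := div_pos (by linarith [hpos 0]) hδ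
  filter_upwards [(hlim 0).eventually_le_const (lt_add_one (f₀ 0)),
    eventually_forall_pos_of_convexOn hf hlim (isCompact_closedBall 0 ((f₀ 0 + 1) / δ))
      fun v _ => hpos v] with i hzero hball
  exact neg_mul_norm_le_of_convexOn (hf i) hR (fun v hv => (hball v hv).le)
    (by rwa [mul_div_cancel₀ _ hδ.ne'])

end ConvexOn

section HahnBanach

variable {E V : Type*} [AddCommGroup E] [Module ℝ E] [TopologicalSpace E]
  [IsTopologicalAddGroup E] [ContinuousSMul ℝ E]

lemma exists_affine_between_of_concaveOn_of_convexOn [AddCommGroup V] [Module ℝ V]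
    {f : E → ℝ} (hf : ConvexOn ℝ Set.univ f) (hcont : Continuous f)
    {p : V → ℝ} (hp : ConcaveOn ℝ Set.univ p) (A : V →ₗ[ℝ] E) (hpf : ∀ v, p v ≤ f (A v)) :
    ∃ (ℓ : E →L[ℝ] ℝ) (b : ℝ), (∀ y, ℓ y + b ≤ f y) ∧ ∀ v, p v ≤ ℓ (A v) + b := by
  let epi : Set (E × ℝ) := {q | q.1 ∈ Set.univ ∧ f q.1 < q.2}
  let hypo : Set (E × ℝ) := A.prodMap LinearMap.id '' {q | q.1 ∈ Set.univ ∧ q.2 ≤ p q.1}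
  have hopen : IsOpen epi := by
    simpa [epi] using isOpen_lt (hcont.comp continuous_fst) continuous_snd
  have hdisj : Disjoint epi hypo := by
    rw [Set.disjoint_left]
    rintro _ ⟨-, hlt⟩ ⟨q, ⟨-, hle⟩, rfl⟩
    exact (hle.trans (hpf q.1)).not_gt hlt
  obtain ⟨Φ, u, hepi, hhypo⟩ := geometric_hahn_banach_open hf.convex_strict_epigraph hopen
    (hp.convex_hypograph.linear_image _) hdisj
  set φ : E →L[ℝ] ℝ := Φ.comp (.inl ℝ E ℝ)
  set α : ℝ := Φ (0, 1)
  have hΦ (y : E) (r : ℝ) : Φ (y, r) = φ y + r * α := by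
    rw [show (y, r) = (y, 0) + r • ((0, 1) : E × ℝ) by simp, map_add, map_smul, smul_eq_mul]
    rfl
  have habove (y : E) (r : ℝ) (hr : f y < r) : φ y + r * α < u :=
    hΦ y r ▸ hepi (y, r) ⟨trivial, hr⟩
  have hbelow (v : V) : u ≤ φ (A v) + p v * α :=
    hΦ (A v) (p v) ▸ hhypo (A v, p v) ⟨(v, p v), ⟨trivial, le_rfl⟩, rfl⟩
  have hα : α < 0 := by
    have hgap : (f (A 0) + 1 - p 0) * α < 0 := by
      linarith [habove (A 0) _ (lt_add_one _), hbelow 0]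
    exact neg_of_mul_neg_right hgap (by linarith [hpf 0])
  have hgraph (y : E) : (-α⁻¹ • φ) y + u / α = (u - φ y) / α := by
    simp only [smul_apply, smul_eq_mul]
    ring
  refine ⟨-α⁻¹ • φ, u / α, fun y => le_of_forall_gt_imp_ge_of_dense fun r hr => ?_, fun v => ?_⟩
  · rw [hgraph, div_le_iff_of_neg hα]
    linarith [habove y r hr]
  · rw [hgraph, le_div_iff_of_neg hα]
    linarith [hbelow v]

lemma abs_le_mul_norm_of_le_mul_norm_add [SeminormedAddCommGroup V] [NormedSpace ℝ V]
    {ℓ : V →ₗ[ℝ] ℝ} {δ b : ℝ} (h : ∀ v, ℓ v ≤ δ * ‖v‖ + b) (v : V) : |ℓ v| ≤ δ * ‖v‖ := by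
  have hle (w : V) : ℓ w ≤ δ * ‖w‖ := by
    by_contra! hw
    obtain ⟨n, hn⟩ := exists_lt_nsmul (sub_pos.2 hw) b
    have hscaled := h ((n : ℝ) • w)
    rw [map_smul, norm_smul, Real.norm_natCast, smul_eq_mul] at hscaled
    rw [nsmul_eq_mul] at hn
    linarith
  exact abs_le'.2 ⟨hle v, by simpa using hle (-v)⟩

lemma exists_dual_le_abs_sub_le_mul_norm [SeminormedAddCommGroup V] [NormedSpace ℝ V]
    {f : E → ℝ} (hf : ConvexOn ℝ Set.univ f) (hcont : Continuous f) (A : V →ₗ[ℝ] E)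
    (ℓ : V →ₗ[ℝ] ℝ) {δ : ℝ} (hδ : 0 ≤ δ) (h : ∀ v, ℓ v - δ * ‖v‖ ≤ f (A v)) :
    ∃ x : E →L[ℝ] ℝ, (∀ y, x y ≤ f y) ∧ ∀ v, |x (A v) - ℓ v| ≤ δ * ‖v‖ := by
  have hconcave : ConcaveOn ℝ Set.univ fun v => ℓ v - δ * ‖v‖ :=
    (ℓ.concaveOn convex_univ).sub (convexOn_univ_norm.smul hδ)
  obtain ⟨x, b, hxf, hx⟩ := exists_affine_between_of_concaveOn_of_convexOn hf hcont hconcave A h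
  have hb : 0 ≤ b := by simpa using hx 0
  refine ⟨x, fun y => (le_add_of_nonneg_right hb).trans (hxf y), fun v => ?_⟩
  rw [abs_sub_comm]
  refine abs_le_mul_norm_of_le_mul_norm_add (ℓ := ℓ - (x : E →ₗ[ℝ] ℝ) ∘ₗ A) (b := b)
    (fun w => ?_) v
  have := hx w
  simp only [LinearMap.sub_apply, LinearMap.comp_apply, ContinuousLinearMap.coe_coe]
  linarith

end HahnBanach

section Conjugate

variable {ι E : Type*} [AddCommGroup E] [Module ℝ E] [TopologicalSpace E] {l : Filter ι}
  {g : ι → E → ℝ} {g₀ : E → ℝ}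

/-- The convex conjugate of a real-valued function, on the weak dual; it takes values in
`EReal` since the supremum may be `⊤`. -/
noncomputable def convexConjugate (f : E → ℝ) (x : WeakDual ℝ E) : EReal :=
  ⨆ y, ((x y : EReal) - (f y : EReal))

lemma convexConjugate_le_coe_iff {f : E → ℝ} {x : WeakDual ℝ E} {a : ℝ} :
    convexConjugate f x ≤ a ↔ ∀ y, x y ≤ f y + a := by
  simp only [convexConjugate, iSup_le_iff, ← EReal.coe_sub, EReal.coe_le_coe_iff,
    sub_le_iff_le_add']

lemma coe_sub_le_convexConjugate (f : E → ℝ) (x : WeakDual ℝ E) (y : E) :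
    ((x y - f y : ℝ) : EReal) ≤ convexConjugate f x :=
  le_iSup (fun y => (x y : EReal) - (f y : EReal)) y

lemma convexConjugate_le_gammaLiminf (hlim : ∀ y, Tendsto (fun i => g i y) l (𝓝 (g₀ y)))
    (x : WeakDual ℝ E) :
    convexConjugate g₀ x ≤ gammaLiminf (fun i => convexConjugate (g i)) l x := by
  refine iSup_le fun y => EReal.ge_of_forall_gt_iff_ge.1 fun a ha => le_gammaLiminf ?_
  have hy : Tendsto (fun p : ι × WeakDual ℝ E => p.2 y - g p.1 y) (l ×ˢ 𝓝 x)
      (𝓝 (x y - g₀ y)) :=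
    (((WeakDual.eval_continuous y).tendsto x).comp tendsto_snd).sub ((hlim y).comp tendsto_fst)
  filter_upwards [hy.eventually_const_lt (by exact_mod_cast ha)] with p hp
  exact (EReal.coe_le_coe hp.le).trans (coe_sub_le_convexConjugate (g p.1) p.2 y)

lemma exists_finset_forall_abs_sub_lt_subset {x : WeakDual ℝ E} {U : Set (WeakDual ℝ E)}
    (hU : U ∈ 𝓝 x) :
    ∃ (s : Finset E) (ε : ℝ), 0 < ε ∧ {x' : WeakDual ℝ E | ∀ y ∈ s, |x' y - x y| < ε} ⊆ U := by
  obtain ⟨s, ε, hε, hball⟩ :=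
    ((topDualPairing ℝ E).weakBilin_withSeminorms.mem_nhds_iff x U).1 hU
  exact ⟨s, ε, hε, fun x' hx' => hball (Seminorm.finset_sup_apply_lt hε hx')⟩

variable [IsTopologicalAddGroup E] [ContinuousSMul ℝ E]

lemma eventually_exists_mem_convexConjugate_le (hconv : ∀ i, ConvexOn ℝ Set.univ (g i))
    (hcont : ∀ i, Continuous (g i)) (hlim : ∀ y, Tendsto (fun i => g i y) l (𝓝 (g₀ y)))
    {x : WeakDual ℝ E} {M : ℝ} (hM : convexConjugate g₀ x < M) {U : Set (WeakDual ℝ E)}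
    (hU : U ∈ 𝓝 x) : ∀ᶠ i in l, ∃ x' ∈ U, convexConjugate (g i) x' ≤ M := by
  classical
  obtain ⟨s, ε, hε, hsU⟩ := exists_finset_forall_abs_sub_lt_subset hU
  let A : (s → ℝ) →ₗ[ℝ] E := Fintype.linearCombination ℝ Subtype.val
  let ℓ : (s → ℝ) →ₗ[ℝ] ℝ := WeakDual.toStrongDual x ∘ₗ A
  have hpos (v : s → ℝ) : 0 < g₀ (A v) + M - ℓ v := by
    have hlt : ℓ v - g₀ (A v) < M := by
      exact_mod_cast (coe_sub_le_convexConjugate g₀ x (A v)).trans_lt hM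
    linarith
  have hconvM (i : ι) : ConvexOn ℝ Set.univ fun y => g i y + M := (hconv i).add_const M
  have hslope : ∀ᶠ i in l, ∀ v, -(ε / 2 * ‖v‖) ≤ g i (A v) + M - ℓ v :=
    eventually_forall_neg_mul_norm_le_of_convexOn
      (fun i => ((hconvM i).comp_linearMap A).sub (ℓ.concaveOn convex_univ))
      (fun v => ((hlim (A v)).add_const M).sub_const (ℓ v)) hpos (half_pos hε)
  filter_upwards [hslope] with i hi
  obtain ⟨x', hx'g, hx'⟩ := exists_dual_le_abs_sub_le_mul_norm (hconvM i)
    ((hcont i).add continuous_const) A ℓ (half_pos hε).le fun v => by linarith [hi v]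
  refine ⟨StrongDual.toWeakDual x', hsU fun y hy => ?_, convexConjugate_le_coe_iff.2 hx'g⟩
  have hAy : A (Pi.single ⟨y, hy⟩ 1) = y := by simp [A]
  have hclose : |x' y - x y| ≤ ε / 2 := by
    simpa [ℓ, hAy, Pi.norm_single] using hx' (Pi.single ⟨y, hy⟩ 1)
  exact hclose.trans_lt (half_lt_self hε)

lemma gammaLimsup_convexConjugate_le (hconv : ∀ i, ConvexOn ℝ Set.univ (g i))
    (hcont : ∀ i, Continuous (g i)) (hlim : ∀ y, Tendsto (fun i => g i y) l (𝓝 (g₀ y)))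
    (x : WeakDual ℝ E) :
    gammaLimsup (fun i => convexConjugate (g i)) l x ≤ convexConjugate g₀ x :=
  EReal.le_of_forall_lt_iff_le.1 fun _ hM => gammaLimsup_le fun _ hU =>
    eventually_exists_mem_convexConjugate_le hconv hcont hlim hM hU

theorem stmt8_general [l.NeBot] (hconv : ∀ i, ConvexOn ℝ Set.univ (g i))
    (hcont : ∀ i, Continuous (g i)) (hlim : ∀ y, Tendsto (fun i => g i y) l (𝓝 (g₀ y))) :
    GammaTendsto (fun i => convexConjugate (g i)) l (convexConjugate g₀) :=
  .of_le (convexConjugate_le_gammaLiminf hlim) (gammaLimsup_convexConjugate_le hconv hcont hlim)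

end Conjugate

/-- Corollary `app-A2`: `Y` a normed space, `X = Y'` its dual with the weak-* topology;
`(g_n)` real-valued convex functions on `Y` converging pointwise to `g`, with
`|g_n(y)| ≤ c(1+‖y‖)`.  Then the convex conjugates `f_n = g_n*` Γ-converge to `f = g*`
on `X` for `σ(X,Y)`: for every `x`, both
`sup_{U∈N(x)} liminf_n inf_{x'∈U} f_n(x')` and `sup_{U∈N(x)} limsup_n inf_{x'∈U} f_n(x')`
equal `f(x)`. -/
theorem stmt8 {Y : Type*} [NormedAddCommGroup Y] [NormedSpace ℝ Y]
    (g : ℕ → Y → ℝ) (hconv : ∀ n, ConvexOn ℝ Set.univ (g n))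
    (glim : Y → ℝ) (hlim : ∀ y, Tendsto (fun n => g n y) atTop (𝓝 (glim y)))
    (c : ℝ) (hc : 0 < c) (hbound : ∀ n y, |g n y| ≤ c * (1 + ‖y‖)) :
    ∀ x : WeakDual ℝ Y,
      (⨆ U ∈ 𝓝 x, atTop.liminf fun n =>
          ⨅ x' ∈ U, ⨆ y : Y, ((x' y : EReal) - (g n y : EReal)))
        = (⨆ y : Y, ((x y : EReal) - (glim y : EReal))) ∧
      (⨆ U ∈ 𝓝 x, atTop.limsup fun n =>
          ⨅ x' ∈ U, ⨆ y : Y, ((x' y : EReal) - (g n y : EReal)))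
        = (⨆ y : Y, ((x y : EReal) - (glim y : EReal))) :=
  stmt8_general hconv (fun n => continuous_of_convexOn_of_le (hconv n) (by fun_prop)
    fun y => (le_abs_self _).trans (hbound n y)) hlim
end

section
/- Let X be a Polish space and ψ : C_b(X) → ℝ a function satisfying: (i) ψ(aF) ≤ 0 for all a ≤ 0 and all F ≥ 0 in C_b(X); (ii) ψ(c·1) = c for all constants c ∈ ℝ; (iii) for every sequence F_n ≥ 0 in C_b(X) decreasing pointwise to 0 and every a ≥ 0, lim_n ψ(aF_n) = 0. Then every continuous linear functional q on C_b(X) with sup_{F∈C_b(X)} {⟨F,q⟩ − ψ(F)} < ∞ is nonnegative, has total mass 1, and satisfies lim_n ⟨F_n,q⟩ = 0 for every such decreasing sequence; hence q is represented by a Borel probability measure on X. -/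
open MeasureTheory Filter Topology
open scoped ENNReal BoundedContinuousFunction

/-!
If `q - ψ ≤ C`, then `a * q F ≤ C + ψ (a • F)` for every scalar `a`, and letting `|a| → ∞` turns
each hypothesis on `ψ` into the corresponding property of `q`.

For the representation, `q` extends to the Stone–Čech compactification `βX` by `g ↦ q (g ∘ ι)`, so
Riesz–Markov–Kakutani yields a regular measure `ν` on `βX`. If `g` is positive on `X`, then
`(1 - n g)⁺` decreases to `0` on `X` and equals `1` on `{g = 0}`, so σ-smoothness gives
`ν {g = 0} = 0`. As `X` is Lindelöf, the complement of every open neighbourhood of `X` lies in such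
a zero set, so `X` has full outer measure in `βX` and `ν` induces a measure on `X`.
-/

section LinearMajorant

theorem nonpos_of_forall_nonneg_mul_le {x C : ℝ} (h : ∀ a, 0 ≤ a → a * x ≤ C) : x ≤ 0 := by
  by_contra! hx
  obtain ⟨n, hn⟩ := exists_lt_nsmul hx C
  exact (h n n.cast_nonneg).not_gt (by simpa using hn)

theorem bddAbove_range_of_iSup_coe_lt_top {ι : Sort*} {f : ι → ℝ}
    (h : ⨆ i, (f i : EReal) < ⊤) : BddAbove (Set.range f) := by
  obtain ⟨C, hC, -⟩ := EReal.lt_iff_exists_real_btwn.1 h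
  exact ⟨C, Set.forall_mem_range.2 fun i => EReal.coe_le_coe_iff.1 <|
    (le_iSup (fun i => (f i : EReal)) i).trans hC.le⟩

variable {V : Type*} [AddCommGroup V] [Module ℝ V] {ψ : V → ℝ} {q : V →ₗ[ℝ] ℝ}

theorem exists_mul_le_add_of_bddAbove_sub (hq : BddAbove (Set.range fun v => q v - ψ v)) :
    ∃ C, ∀ (a : ℝ) (v : V), a * q v ≤ C + ψ (a • v) := by
  obtain ⟨C, hC⟩ := hq
  refine ⟨C, fun a v => ?_⟩
  have := Set.forall_mem_range.1 hC (a • v)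
  rwa [map_smul, smul_eq_mul, sub_le_iff_le_add] at this

theorem nonneg_of_bddAbove_sub (hq : BddAbove (Set.range fun v => q v - ψ v)) {v : V}
    (hψ : ∀ a : ℝ, a ≤ 0 → ψ (a • v) ≤ 0) : 0 ≤ q v := by
  obtain ⟨C, hC⟩ := exists_mul_le_add_of_bddAbove_sub hq
  refine neg_nonpos.1 <| nonpos_of_forall_nonneg_mul_le (C := C) fun a ha => ?_
  linarith [hC (-a) v, hψ (-a) (neg_nonpos.2 ha)]

theorem eq_one_of_bddAbove_sub (hq : BddAbove (Set.range fun v => q v - ψ v)) {v : V}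
    (hψ : ∀ c : ℝ, ψ (c • v) = c) : q v = 1 := by
  obtain ⟨C, hC⟩ := exists_mul_le_add_of_bddAbove_sub hq
  have hle : q v - 1 ≤ 0 := nonpos_of_forall_nonneg_mul_le (C := C) fun a _ => by
    linarith [hC a v, hψ a]
  have hge : 1 - q v ≤ 0 := nonpos_of_forall_nonneg_mul_le (C := C) fun a _ => by
    linarith [hC (-a) v, hψ (-a)]
  linarith

theorem tendsto_zero_of_bddAbove_sub (hq : BddAbove (Set.range fun v => q v - ψ v))
    {ι : Type*} {l : Filter ι} {v : ι → V} (hv : ∀ i, 0 ≤ q (v i))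
    (hψ : ∀ a : ℝ, 0 ≤ a → Tendsto (fun i => ψ (a • v i)) l (𝓝 0)) :
    Tendsto (fun i => q (v i)) l (𝓝 0) := by
  obtain ⟨C, hC⟩ := exists_mul_le_add_of_bddAbove_sub hq
  refine tendsto_order.2 ⟨fun b hb => .of_forall fun i => hb.trans_le (hv i), fun ε hε => ?_⟩
  obtain ⟨n, hn⟩ := exists_lt_nsmul hε (C + 1)
  filter_upwards [(hψ n n.cast_nonneg).eventually_lt_const one_pos] with i hi
  have hlt : n * q (v i) < n * ε := by
    rw [nsmul_eq_mul] at hn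
    linarith [hC n (v i)]
  exact lt_of_mul_lt_mul_left hlt n.cast_nonneg

end LinearMajorant

section Topology

theorem exists_boundedContinuousFunction_pos_of_isLindelof {K : Type*} [TopologicalSpace K]
    [CompletelyRegularSpace K] {S V : Set K} (hS : IsLindelof S) (hV : IsOpen V) (hSV : S ⊆ V) :
    ∃ g : K →ᵇ ℝ, (∀ x ∈ S, 0 < g x) ∧ Function.support g ⊆ V := by
  have hbump : ∀ x : S, ∃ u : K → unitInterval, Continuous u ∧ u x ≠ 0 ∧ ∀ y ∉ V, u y = 0 := by
    intro x
    obtain ⟨f, hf, hfx, hfV⟩ :=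
      CompletelyRegularSpace.completely_regular_isOpen (x : K) V hV (hSV x.2)
    exact ⟨fun y => unitInterval.symm (f y), by fun_prop, by simp [hfx],
      fun y hy => by simp [hfV hy]⟩
  choose u hu hux huV using hbump
  obtain ⟨r, hr, hSr⟩ := hS.elim_countable_subcover (fun x => {y | u x y ≠ 0})
    (fun x => isOpen_ne_fun (hu x) continuous_const)
    fun x hx => Set.mem_iUnion.2 ⟨⟨x, hx⟩, hux ⟨x, hx⟩⟩
  have := hr.toEncodable
  obtain ⟨c, hc, s, hcs, -⟩ := posSumOfEncodable one_pos r
  have hnonneg : ∀ i y, 0 ≤ c i * (u i y : ℝ) := fun i y => mul_nonneg (hc i).le (u i y).2.1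
  have hnorm : ∀ i y, ‖c i * (u i y : ℝ)‖ ≤ c i := fun i y => by
    rw [Real.norm_of_nonneg (hnonneg i y)]
    exact mul_le_of_le_one_right (hc i).le (u i y).2.2
  have hcont : Continuous fun y => ∑' i, c i * (u i y : ℝ) :=
    continuous_tsum (fun i => (continuous_subtype_val.comp (hu i)).const_mul (c i)) hcs.summable
      hnorm
  let g : K →ᵇ ℝ := .ofNormedAddCommGroup _ hcont s fun y => tsum_of_norm_bounded hcs (hnorm · y)
  refine ⟨g, fun y hy => ?_, fun y hy => ?_⟩
  · obtain ⟨i, hi, hiy⟩ := Set.mem_iUnion₂.1 (hSr hy)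
    have hpos : 0 < c ⟨i, hi⟩ * (u i y : ℝ) :=
      mul_pos (hc _) (unitInterval.pos_iff_ne_zero.2 hiy)
    have hsum : Summable fun i => c i * (u i y : ℝ) :=
      hcs.summable.of_norm_bounded (hnorm · y)
    exact hsum.tsum_pos (hnonneg · y) ⟨i, hi⟩ hpos
  · by_contra hyV
    exact hy (by simp [g, huV _ y hyV])

theorem exists_boundedContinuousFunction_stoneCechUnit {X : Type*} [TopologicalSpace X]
    (F : X →ᵇ ℝ) : ∃ G : StoneCech X →ᵇ ℝ, ∀ x, G (stoneCechUnit x) = F x := by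
  let F' : X → Metric.closedBall (0 : ℝ) ‖F‖ :=
    fun x => ⟨F x, mem_closedBall_zero_iff.2 (F.norm_coe_le_norm x)⟩
  have hF' : Continuous F' := F.continuous.subtype_mk _
  exact ⟨.mkOfCompact ⟨Subtype.val ∘ stoneCechExtend hF',
    continuous_subtype_val.comp (continuous_stoneCechExtend hF')⟩, fun x =>
      congrArg Subtype.val (stoneCechExtend_stoneCechUnit hF' x)⟩

end Topology

section Measure

theorem exists_map_eq_of_measure_range_eq {X Y : Type*} [MeasurableSpace X] [mY : MeasurableSpace Y]
    {f : X → Y} (hf : Measurable f) (hX : ‹MeasurableSpace X› ≤ mY.comap f)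
    (ν : Measure Y) [IsFiniteMeasure ν] (hν : ν (Set.range f) = ν Set.univ) :
    ∃ m : Measure X, m.map f = ν := by
  let μ : OuterMeasure X := OuterMeasure.comap f ν.toOuterMeasure
  have hμ : ‹MeasurableSpace X› ≤ μ.caratheodory := by
    intro _ hs t
    obtain ⟨B, hB, rfl⟩ := hX _ hs
    simp only [μ, OuterMeasure.comap_apply, Measure.coe_toOuterMeasure, Set.image_inter_preimage,
      Set.image_sdiff_preimage]
    exact (measure_inter_add_sdiff _ hB).symm
  have hfull : toMeasurable ν (Set.range f) =ᵐ[ν] Set.univ :=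
    ae_eq_of_subset_of_measure_ge (Set.subset_univ _) (by rw [measure_toMeasurable, hν])
      (measurableSet_toMeasurable _ _).nullMeasurableSet (measure_ne_top _ _)
  refine ⟨μ.toMeasure hμ, Measure.ext fun B hB => ?_⟩
  calc (μ.toMeasure hμ).map f B = ν (f '' (f ⁻¹' B)) := by
        rw [Measure.map_apply hf hB, toMeasure_apply _ _ (hf hB)]
        rfl
    _ = ν (toMeasurable ν (Set.range f) ∩ B) := by
        rw [Set.image_preimage_eq_range_inter,
          Measure.measure_toMeasurable_inter hB (measure_ne_top _ _)]
    _ = ν B := measure_congr (inter_ae_eq_right_of_ae_eq_univ hfull)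

theorem exists_regular_measure_forall_integral_eq {K : Type*} [TopologicalSpace K] [CompactSpace K]
    [T2Space K] [MeasurableSpace K] [BorelSpace K] (Λ : (K →ᵇ ℝ) →ₗ[ℝ] ℝ)
    (hΛ : ∀ g, 0 ≤ g → 0 ≤ Λ g) :
    ∃ ν : Measure K, ν.Regular ∧ IsFiniteMeasure ν ∧ ∀ g, Λ g = ∫ y, g y ∂ν := by
  let toBounded : CompactlySupportedContinuousMap K ℝ →ₗ[ℝ] (K →ᵇ ℝ) :=
    { toFun g := .mkOfCompact g.toContinuousMap
      map_add' _ _ := rfl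
      map_smul' _ _ := rfl }
  let Λ' := PositiveLinearMap.mk₀ (Λ ∘ₗ toBounded) fun g hg => hΛ _ hg
  refine ⟨RealRMK.rieszMeasure Λ', inferInstance, inferInstance, fun g => ?_⟩
  exact (RealRMK.integral_rieszMeasure Λ'
    (CompactlySupportedContinuousMap.continuousMapEquiv g.toContinuousMap)).symm

end Measure

section SigmaSmooth

theorem antitone_max_one_sub_natCast_mul {t : ℝ} (ht : 0 ≤ t) :
    Antitone fun n : ℕ => max (1 - n * t) 0 := fun m n hmn => by
  dsimp only
  gcongr

theorem tendsto_max_one_sub_natCast_mul {t : ℝ} (ht : 0 < t) :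
    Tendsto (fun n : ℕ => max (1 - n * t) 0) atTop (𝓝 0) := by
  obtain ⟨N, hN⟩ := exists_lt_nsmul ht 1
  refine tendsto_const_nhds.congr' ?_
  filter_upwards [eventually_ge_atTop N] with n hn
  have hNn : (N : ℝ) * t ≤ n * t := by gcongr
  rw [nsmul_eq_mul] at hN
  exact (max_eq_right (by linarith)).symm

variable {X : Type*} [TopologicalSpace X]

/-- σ-smoothness of a functional on `C_b(X)`: it tends to `0` along every sequence of nonnegative
functions decreasing pointwise to `0`. It is a predicate on bare functions: linearity is not built
in. -/
def IsSigmaSmooth (Λ : (X →ᵇ ℝ) → ℝ) : Prop :=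
  ∀ F : ℕ → X →ᵇ ℝ, (∀ n x, 0 ≤ F n x) → (∀ x, Antitone fun n => F n x) →
    (∀ x, Tendsto (fun n => F n x) atTop (𝓝 0)) → Tendsto (fun n => Λ (F n)) atTop (𝓝 0)

variable {K : Type*} [TopologicalSpace K] [MeasurableSpace K] {ν : Measure K} [IsFiniteMeasure ν]
  {f : C(X, K)} {Λ : (X →ᵇ ℝ) → ℝ}

theorem IsSigmaSmooth.measure_eq_zero [OpensMeasurableSpace K] (hΛ : IsSigmaSmooth Λ)
    (hν : ∀ g : K →ᵇ ℝ, Λ (g.compContinuous f) = ∫ y, g y ∂ν) {g : K →ᵇ ℝ}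
    (hgf : ∀ x, 0 < g (f x)) : ν {y | g y = 0} = 0 := by
  let h : ℕ → K →ᵇ ℝ := fun n => (1 - (n : ℝ) • g) ⊔ 0
  have h_apply : ∀ n y, h n y = max (1 - n * g y) 0 := fun _ _ => rfl
  have h_tendsto : Tendsto (fun n => Λ ((h n).compContinuous f)) atTop (𝓝 0) :=
    hΛ _ (fun _ _ => le_max_right _ _)
      (fun x => antitone_max_one_sub_natCast_mul (hgf x).le)
      fun x => tendsto_max_one_sub_natCast_mul (hgf x)
  have hZ : MeasurableSet {y | g y = 0} := (isClosed_eq g.continuous continuous_const).measurableSet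
  have h_le : ∀ n, ν.real {y | g y = 0} ≤ Λ ((h n).compContinuous f) := fun n => by
    rw [hν, ← integral_indicator_one hZ]
    refine integral_mono ((integrable_const 1).indicator hZ) ((h n).integrable ν) fun y => ?_
    refine Set.indicator_le' (fun y hy => ?_) (fun y _ => le_max_right _ _) y
    have hy0 : g y = 0 := hy
    exact (show h n y = 1 by simp [h_apply, hy0]).ge
  exact (measureReal_eq_zero_iff).1 <|
    (ge_of_tendsto' h_tendsto h_le).antisymm measureReal_nonneg

theorem IsSigmaSmooth.measure_range_eq [LindelofSpace X] [CompletelyRegularSpace K]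
    [OpensMeasurableSpace K] [ν.OuterRegular] (hΛ : IsSigmaSmooth Λ)
    (hν : ∀ g : K →ᵇ ℝ, Λ (g.compContinuous f) = ∫ y, g y ∂ν) :
    ν (Set.range f) = ν Set.univ := by
  refine (measure_mono (Set.subset_univ _)).antisymm ?_
  rw [Set.measure_eq_iInf_isOpen (Set.range f)]
  refine le_iInf₂ fun V hfV => le_iInf fun hV => ?_
  obtain ⟨g, hg, hgV⟩ :=
    exists_boundedContinuousFunction_pos_of_isLindelof (isLindelof_range f.continuous) hV hfV
  have hzero : ν {y | g y = 0} = 0 :=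
    hΛ.measure_eq_zero hν fun x => hg (f x) (Set.mem_range_self x)
  have hVc : ν Vᶜ = 0 := measure_mono_null (fun y hy => not_not.1 fun h => hy (hgV h)) hzero
  exact (measure_congr (ae_eq_univ.2 hVc)).ge

theorem IsSigmaSmooth.exists_measure [CompletelyRegularSpace X] [LindelofSpace X]
    [MeasurableSpace X] [BorelSpace X] {q : (X →ᵇ ℝ) →ₗ[ℝ] ℝ} (hq : IsSigmaSmooth q)
    (hpos : ∀ F, 0 ≤ F → 0 ≤ q F) :
    ∃ m : Measure X, IsFiniteMeasure m ∧ ∀ F, q F = ∫ x, F x ∂m := by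
  borelize (StoneCech X)
  let ι : C(X, StoneCech X) := ⟨stoneCechUnit, continuous_stoneCechUnit⟩
  obtain ⟨ν, _, _, hν⟩ := exists_regular_measure_forall_integral_eq
    (q ∘ₗ (BoundedContinuousFunction.compContinuousCLM ℝ ℝ ι).toLinearMap)
    fun g hg => hpos _ fun x => hg (ι x)
  have hborel : ‹MeasurableSpace X› ≤ (borel (StoneCech X)).comap ι := by
    rw [← borel_comap]
    exact (BorelSpace.measurable_eq.trans
      (congrArg (@borel X) isInducing_stoneCechUnit.eq_induced)).le
  obtain ⟨m, hm⟩ := exists_map_eq_of_measure_range_eq ι.continuous.measurable hborel ν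
    (hq.measure_range_eq hν)
  have hfinite : IsFiniteMeasure (m.map ι) := hm ▸ inferInstance
  refine ⟨m, Measure.isFiniteMeasure_of_map ι.continuous.aemeasurable, fun F => ?_⟩
  obtain ⟨G, hG⟩ := exists_boundedContinuousFunction_stoneCechUnit F
  have hGF : G.compContinuous ι = F := BoundedContinuousFunction.ext hG
  calc q F = ∫ y, G y ∂ν := by rw [← hν, ← hGF]; rfl
    _ = ∫ x, G (ι x) ∂m := by
        rw [← hm, integral_map ι.continuous.aemeasurable G.continuous.aestronglyMeasurable]
    _ = ∫ x, F x ∂m := by rw [← hGF]; rfl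

end SigmaSmooth

theorem stmt16_general {X : Type*} [TopologicalSpace X] [CompletelyRegularSpace X] [LindelofSpace X]
    [MeasurableSpace X] [BorelSpace X]
    (ψ : (X →ᵇ ℝ) → ℝ)
    (h1 : ∀ a : ℝ, a ≤ 0 → ∀ F : X →ᵇ ℝ, (∀ x, 0 ≤ F x) → ψ (a • F) ≤ 0)
    (h2 : ∀ c : ℝ, ψ (c • (1 : X →ᵇ ℝ)) = c)
    (h3 : ∀ F : ℕ → X →ᵇ ℝ, (∀ n x, 0 ≤ F n x) → (∀ x, Antitone fun n => F n x) →
      (∀ x, Tendsto (fun n => F n x) atTop (𝓝 0)) →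
      ∀ a : ℝ, 0 ≤ a → Tendsto (fun n => ψ (a • F n)) atTop (𝓝 0))
    (q : (X →ᵇ ℝ) →ₗ[ℝ] ℝ)
    (hfin : (⨆ F : X →ᵇ ℝ, ((q F - ψ F : ℝ) : EReal)) < ⊤) :
    (∀ F : X →ᵇ ℝ, (∀ x, 0 ≤ F x) → 0 ≤ q F) ∧
    q (1 : X →ᵇ ℝ) = 1 ∧
    (∀ F : ℕ → X →ᵇ ℝ, (∀ n x, 0 ≤ F n x) → (∀ x, Antitone fun n => F n x) →
      (∀ x, Tendsto (fun n => F n x) atTop (𝓝 0)) →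
      Tendsto (fun n => q (F n)) atTop (𝓝 0)) ∧
    ∃ m : Measure X, IsProbabilityMeasure m ∧ ∀ F : X →ᵇ ℝ, q F = ∫ x, F x ∂m := by
  have hbdd := bddAbove_range_of_iSup_coe_lt_top hfin
  have hpos : ∀ F : X →ᵇ ℝ, (∀ x, 0 ≤ F x) → 0 ≤ q F := fun F hF =>
    nonneg_of_bddAbove_sub hbdd fun a ha => h1 a ha F hF
  have hone : q 1 = 1 := eq_one_of_bddAbove_sub hbdd h2
  have hsmooth : IsSigmaSmooth q := fun F hF hanti hlim =>
    tendsto_zero_of_bddAbove_sub hbdd (fun n => hpos _ (hF n)) (h3 F hF hanti hlim)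
  obtain ⟨m, -, hm⟩ := hsmooth.exists_measure hpos
  have hmass : m.real Set.univ = 1 := by simpa [hone] using (hm 1).symm
  exact ⟨hpos, hone, hsmooth, m, isProbabilityMeasure_iff_real.2 hmass, hm⟩

/-- Abstract step in the proof of Lemma `res-202`: if `ψ : C_b(X) → ℝ` satisfies
(i) `ψ(aF) ≤ 0` for `a ≤ 0`, `F ≥ 0`; (ii) `ψ(c·1) = c`; (iii) `ψ(aF_n) → 0` for every
`a ≥ 0` and every nonnegative sequence `F_n` decreasing pointwise to `0`, then any
continuous linear functional `q` on `C_b(X)` with `sup_F (⟨F,q⟩ − ψ(F)) < ∞` is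
nonnegative, has unit mass, sends such decreasing sequences to `0`, and is represented
by a Borel probability measure on the Polish space `X`. -/
theorem stmt16 {X : Type*}
    [MetricSpace X] [CompleteSpace X] [TopologicalSpace.SeparableSpace X]
    [MeasurableSpace X] [BorelSpace X]
    (ψ : (X →ᵇ ℝ) → ℝ)
    (h1 : ∀ a : ℝ, a ≤ 0 → ∀ F : X →ᵇ ℝ, (∀ x, 0 ≤ F x) → ψ (a • F) ≤ 0)
    (h2 : ∀ c : ℝ, ψ (c • (1 : X →ᵇ ℝ)) = c)
    (h3 : ∀ F : ℕ → X →ᵇ ℝ, (∀ n x, 0 ≤ F n x) → (∀ x, Antitone fun n => F n x) →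
      (∀ x, Tendsto (fun n => F n x) atTop (𝓝 0)) →
      ∀ a : ℝ, 0 ≤ a → Tendsto (fun n => ψ (a • F n)) atTop (𝓝 0))
    (q : (X →ᵇ ℝ) →L[ℝ] ℝ)
    (hfin : (⨆ F : X →ᵇ ℝ, ((q F - ψ F : ℝ) : EReal)) < ⊤) :
    (∀ F : X →ᵇ ℝ, (∀ x, 0 ≤ F x) → 0 ≤ q F) ∧
    q (1 : X →ᵇ ℝ) = 1 ∧
    (∀ F : ℕ → X →ᵇ ℝ, (∀ n x, 0 ≤ F n x) → (∀ x, Antitone fun n => F n x) →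
      (∀ x, Tendsto (fun n => F n x) atTop (𝓝 0)) →
      Tendsto (fun n => q (F n)) atTop (𝓝 0)) ∧
    ∃ m : Measure X, IsProbabilityMeasure m ∧ ∀ F : X →ᵇ ℝ, q F = ∫ x, F x ∂m := by
  have := UniformSpace.secondCountable_of_separable X
  exact stmt16_general ψ h1 h2 h3 q.toLinearMap hfin
end
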